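/- Let β ∈ (0,1] and let μ ∈ ℝ satisfy g_β(μ) = 0. Define m₁, m₂, m₃, n₁, n₂, n₃ by the anticlockwise solution formulas, and set δ = β(m₂ − m₁) + (1+β)(n₁ − n₃). Then the five periodicity equations of the anticlockwise (anti-Shapley) orbit hold: n₁·β = n₂·(δ + n₁ − n₃ + β); n₁ − n₃ + n₂·β + δ = n₃·(δ + n₁ − n₃ + β); n₁·β + β·δ = n₁·(δ + n₁ − n₃ + β); m₂·β + n₁ − n₃ = m₂·(δ + n₁ − n₃ + β); and m₂·β − β·δ = m₁·(δ + n₁ − n₃ + β). -/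

import Mathlib

/-- The cubic governing the anticlockwise (anti-Shapley) periodic orbit. -/
noncomputable def gAnti (β Z : ℝ) : ℝ :=
  (3*β^3 + 3*β^2 + 3*β)*Z^3 - (5*β^3 + 7*β^2 + 4*β + 2)*Z^2
    + (2*β^3 + 5*β^2 + β + 1)*Z - β^2

/-- if β ∈ (0,1], μ is a root of g_β, and m₁,m₂,m₃,n₁,n₂,n₃ are
given by the anticlockwise solution formulas, with δ = β(m₂−m₁)+(1+β)(n₁−n₃),
then the five periodicity equations of the anticlockwise (anti-Shapley) orbit
hold. -/
theorem stmt12 (β μ : ℝ) (hβ : β ∈ Set.Ioc (0 : ℝ) 1) (hμ : gAnti β μ = 0)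
    (m1 m2 m3 n1 n2 n3 δ : ℝ)
    (hm2 : m2 = μ) (hm3 : m3 = μ)
    (hm1 : m1 = 1 - β - 2*μ)
    (hn1 : n1 = β - μ*β)
    (hn2 : n2 = (2*β^2 + 1 - 3*μ*β^3 - 5*μ*β^2 - 2*μ*β - 2*μ + 3*μ^2*β^2 + 3*μ^2*β + 3*μ^2*β^3)
                  /(1 + β + β^2))
    (hn3 : n3 = -(β^2 - β - 4*μ*β^3 - 6*μ*β^2 - 3*μ*β - 2*μ + 3*μ^2*β^2 + 3*μ^2*β + 3*μ^2*β^3)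
                  /(1 + β + β^2))
    (hδ : δ = β*(m2 - m1) + (1 + β)*(n1 - n3)) :
    n1*β = n2*(δ + n1 - n3 + β) ∧
    n1 - n3 + n2*β + δ = n3*(δ + n1 - n3 + β) ∧
    n1*β + β*δ = n1*(δ + n1 - n3 + β) ∧
    m2*β + n1 - n3 = m2*(δ + n1 - n3 + β) ∧
    m2*β - β*δ = m1*(δ + n1 - n3 + β) := by
  have hD : 1 + β + β^2 ≠ 0 := by nlinarith [hβ.1, sq_nonneg β]
  unfold gAnti at hμ
  subst hδ hm2 hm1 hn1 hn2 hn3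
  refine ⟨?_, ?_, ?_, ?_, ?_⟩ <;> field_simp
  · linear_combination (4 + 3*β + 9*β^2 + 8*β^3 + 3*β^4
      - m2*(6*β + 9*β^2 + 9*β^3 + 3*β^4)) * hμ
  · linear_combination (-4 - 5*β - 12*β^2 - 11*β^3 - 4*β^4
      + m2*(6*β + 9*β^2 + 9*β^3 + 3*β^4)) * hμ
  · linear_combination (2*β + β^2) * hμ
  · linear_combination (-2 - β) * hμ
  · linear_combination (4 + 2*β) * hμ
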